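/- Let $(X,\{f_n\})$ be a NADS with $h_{top}(X, \{f_n\}) > 0$. Then the induced system on the space of Borel probability measures satisfies $h_{top}(\mathcal{M}(X), \{f_n^*\}) = +\infty$. -/

import Mathlib

open Filter MeasureTheory

noncomputable section

def compSeq {X : Type*} (f : ℕ → X → X) : ℕ → X → X
  | 0 => id
  | n + 1 => f n ∘ compSeq f n

/-- `E` is an `(n, ε)`-separated set for the nonautonomous system `(X, f)`
with respect to the distance function `d`. -/
def IsSeparatedSet {X : Type*} (d : X → X → ℝ) (f : ℕ → X → X) (n : ℕ) (ε : ℝ)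
    (E : Set X) : Prop :=
  ∀ x ∈ E, ∀ y ∈ E, x ≠ y → ∃ j < n, ε < d (compSeq f j x) (compSeq f j y)

/-- `F` is an `(n, ε)`-spanning set for the nonautonomous system `(X, f)`. -/
def IsSpanningSet {X : Type*} (d : X → X → ℝ) (f : ℕ → X → X) (n : ℕ) (ε : ℝ)
    (F : Set X) : Prop :=
  ∀ x : X, ∃ y ∈ F, ∀ j < n, d (compSeq f j x) (compSeq f j y) < ε

/-- maximal cardinality of an `(n, ε)`-separated set. -/
def sepNum {X : Type*} (d : X → X → ℝ) (f : ℕ → X → X) (n : ℕ) (ε : ℝ) : ℕ :=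
  sSup {c | ∃ E : Finset X, IsSeparatedSet d f n ε ↑E ∧ E.card = c}

/-- minimal cardinality of an `(n, ε)`-spanning set. -/
def spanNum {X : Type*} (d : X → X → ℝ) (f : ℕ → X → X) (n : ℕ) (ε : ℝ) : ℕ :=
  sInf {c | ∃ F : Finset X, IsSpanningSet d f n ε ↑F ∧ F.card = c}

/-- Topological entropy of a nonautonomous dynamical system, via separated sets. -/
def nadsEntropy {X : Type*} (d : X → X → ℝ) (f : ℕ → X → X) : EReal :=
  ⨆ (ε : ℝ) (_ : 0 < ε),
    atTop.limsup fun n : ℕ => ((Real.log (sepNum d f n ε) / n : ℝ) : EReal)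

end

open scoped ENNReal

/-!
For a probability measure `P` on a finite set `ι`, sending `x : ι → X` to its law
`∑ i, P {i} • δ_{x i}` intertwines the coordinatewise action of `f` on `X^ι` with the induced action
on measures. If the atoms of `P` have pairwise distinct subset sums, then `x` can be recovered from
its law, so `X^ι` embeds in the space of probability measures, whose entropy is therefore at least
`card ι` times that of `X`.
-/

open Function Set

section Order

theorem monotone_log_natCast : Monotone fun n : ℕ => Real.log n := by
  intro s t hst
  rcases s.eq_zero_or_pos with rfl | hs
  · simpa only [Nat.cast_zero, Real.log_zero] using Real.log_natCast_nonneg t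
  · exact Real.log_le_log (Nat.cast_pos.2 hs) (Nat.cast_le.2 hst)

theorem eq_top_of_natCast_mul_le {a b : EReal} (ha : 0 < a)
    (hab : ∀ k : ℕ, 0 < k → (k : EReal) * a ≤ b) : b = ⊤ := by
  obtain ⟨c, hc₀, hca⟩ := EReal.lt_iff_exists_real_btwn.1 ha
  have hc : 0 < c := EReal.coe_pos.1 hc₀
  refine EReal.eq_top_iff_forall_lt b |>.2 fun y => ?_
  obtain ⟨k, hk⟩ := exists_nat_gt (max (y / c) 0)
  have hk₀ : 0 < k := Nat.cast_pos.1 ((le_max_right _ _).trans_lt hk)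
  have hyk : y < k * c := (div_lt_iff₀ hc).1 ((le_max_left _ _).trans_lt hk)
  calc (y : EReal) < (k : EReal) * c := by exact_mod_cast hyk
    _ ≤ k * a := mul_le_mul_of_nonneg_left hca.le (by exact_mod_cast hk₀.le)
    _ ≤ b := hab k hk₀

end Order

section CompSeq

variable {X Y ι : Type*}

theorem continuous_compSeq [TopologicalSpace X] {f : ℕ → X → X} (hf : ∀ n, Continuous (f n)) :
    ∀ n, Continuous (compSeq f n)
  | 0 => continuous_id
  | n + 1 => (hf n).comp (continuous_compSeq hf n)

theorem semiconj_compSeq {f : ℕ → X → X} {g : ℕ → Y → Y} {π : X → Y}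
    (hπ : ∀ n, Semiconj π (f n) (g n)) : ∀ n, Semiconj π (compSeq f n) (compSeq g n)
  | 0 => Semiconj.id_right
  | n + 1 => (hπ n).comp_right (semiconj_compSeq hπ n)

theorem compSeq_piMap {X : ι → Type*} (f : ∀ i, ℕ → X i → X i) (n : ℕ) :
    compSeq (fun k => Pi.map fun i => f i k) n = Pi.map fun i => compSeq (f i) n := by
  induction n with
  | zero => rfl
  | succ n ih => simp only [compSeq, ih, Pi.map_comp_map]

end CompSeq

namespace IsSeparatedSet

variable {X Y ι : Type*}

theorem image {d : X → X → ℝ} {d' : Y → Y → ℝ} {f : ℕ → X → X} {g : ℕ → Y → Y} {π : X → Y}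
    {n : ℕ} {ε δ : ℝ} {E : Set X} (hE : IsSeparatedSet d f n ε E)
    (hπ : ∀ k, Semiconj π (f k) (g k)) (hd : ∀ x y, ε < d x y → δ < d' (π x) (π y)) :
    IsSeparatedSet d' g n δ (π '' E) := by
  rintro _ ⟨x, hx, rfl⟩ _ ⟨y, hy, rfl⟩ hxy
  obtain ⟨j, hj, hlt⟩ := hE x hx y hy (ne_of_apply_ne π hxy)
  refine ⟨j, hj, ?_⟩
  simpa only [(semiconj_compSeq hπ j).eq] using hd _ _ hlt

theorem univ_pi [Fintype ι] {X : ι → Type*} [∀ i, PseudoMetricSpace (X i)]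
    {f : ∀ i, ℕ → X i → X i} {n : ℕ} {ε : ℝ} {E : ∀ i, Set (X i)}
    (hE : ∀ i, IsSeparatedSet dist (f i) n ε (E i)) :
    IsSeparatedSet dist (fun k => Pi.map fun i => f i k) n ε (univ.pi E) := by
  intro x hx y hy hxy
  obtain ⟨i, hi⟩ := Function.ne_iff.1 hxy
  obtain ⟨j, hj, hlt⟩ := hE i (x i) (hx i trivial) (y i) (hy i trivial) hi
  refine ⟨j, hj, hlt.trans_le ?_⟩
  simp only [compSeq_piMap]
  exact dist_le_pi_dist (Pi.map (fun i => compSeq (f i) j) x)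
    (Pi.map (fun i => compSeq (f i) j) y) i

end IsSeparatedSet

section SepNum

variable {X Y ι : Type*}

/-- When the cardinalities are unbounded, `sepNum` takes the junk value `0`, which `∅` attains. -/
theorem exists_isSeparatedSet_card_eq_sepNum (d : X → X → ℝ) (f : ℕ → X → X) (n : ℕ) (ε : ℝ) :
    ∃ E : Finset X, IsSeparatedSet d f n ε E ∧ E.card = sepNum d f n ε := by
  have hempty : IsSeparatedSet d f n ε (∅ : Finset X) := by simp [IsSeparatedSet]
  by_cases hbdd : BddAbove {c | ∃ E : Finset X, IsSeparatedSet d f n ε E ∧ E.card = c}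
  · exact Nat.sSup_mem (s := {c | ∃ E : Finset X, IsSeparatedSet d f n ε E ∧ E.card = c})
      ⟨0, ∅, hempty, rfl⟩ hbdd
  · exact ⟨∅, hempty, (Nat.sSup_of_not_bddAbove hbdd).symm⟩

/-- Uniform continuity of the first `n` iterates bounds a separated set by the number of small balls
needed to cover `X`, as each ball contains at most one of its points. -/
theorem bddAbove_card_isSeparatedSet [PseudoMetricSpace X] [CompactSpace X] {f : ℕ → X → X}
    (hf : ∀ n, Continuous (f n)) (n : ℕ) {ε : ℝ} (hε : 0 < ε) :
    BddAbove {c | ∃ E : Finset X, IsSeparatedSet dist f n ε E ∧ E.card = c} := by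
  have horbit : UniformContinuous fun x (j : Fin n) => compSeq f j x :=
    CompactSpace.uniformContinuous_of_continuous
      (continuous_pi fun j => continuous_compSeq hf j)
  obtain ⟨δ, hδ, hclose⟩ := Metric.uniformContinuous_iff.1 horbit ε hε
  obtain ⟨t, ht, hcover⟩ :=
    Metric.totallyBounded_iff.1 (isCompact_univ (X := X)).totallyBounded (δ / 2) (half_pos hδ)
  have hnear : ∀ x, ∃ y ∈ t, dist x y < δ / 2 := fun x => by
    simpa using hcover (mem_univ x)
  choose center hcenter_mem hcenter using hnear
  refine ⟨ht.toFinset.card, ?_⟩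
  rintro _ ⟨E, hE, rfl⟩
  refine Finset.card_le_card_of_injOn center (fun x _ => ht.mem_toFinset.2 (hcenter_mem x)) ?_
  intro x hx y hy hxy
  by_contra hne
  obtain ⟨j, hj, hlt⟩ := hE x hx y hy hne
  have hdist : dist x y < δ := by
    have := dist_triangle_right x y (center x)
    linarith [hcenter x, hxy ▸ hcenter y]
  have hle := dist_le_pi_dist (fun j : Fin n => compSeq f j x) (fun j => compSeq f j y) ⟨j, hj⟩
  exact (hlt.trans_le hle).not_gt (hclose hdist)

theorem IsSeparatedSet.card_le_sepNum [PseudoMetricSpace X] [CompactSpace X] {f : ℕ → X → X}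
    (hf : ∀ n, Continuous (f n)) {n : ℕ} {ε : ℝ} (hε : 0 < ε) {E : Finset X}
    (hE : IsSeparatedSet dist f n ε E) : E.card ≤ sepNum dist f n ε :=
  le_csSup (bddAbove_card_isSeparatedSet hf n hε) ⟨E, hE, rfl⟩

theorem prod_sepNum_le_sepNum_piMap [Fintype ι] {X : ι → Type*} [∀ i, PseudoMetricSpace (X i)]
    [∀ i, CompactSpace (X i)] {f : ∀ i, ℕ → X i → X i} (hf : ∀ i n, Continuous (f i n))
    (n : ℕ) {ε : ℝ} (hε : 0 < ε) :
    ∏ i, sepNum dist (f i) n ε ≤ sepNum dist (fun k => Pi.map fun i => f i k) n ε := by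
  classical
  choose E hE hcard using fun i => exists_isSeparatedSet_card_eq_sepNum dist (f i) n ε
  have hprod := IsSeparatedSet.univ_pi hE
  rw [← Fintype.coe_piFinset] at hprod
  simpa only [Fintype.card_piFinset, hcard] using
    hprod.card_le_sepNum (fun k => Continuous.piMap fun i => hf i k) hε

theorem exists_pos_forall_lt_dist_map [PseudoMetricSpace X] [CompactSpace X] [MetricSpace Y]
    {π : X → Y} (hπ : Continuous π) (hinj : Injective π) {ε : ℝ} (hε : 0 < ε) :
    ∃ δ > 0, ∀ x y, ε < dist x y → δ < dist (π x) (π y) := by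
  have hcompact : IsCompact {p : X × X | ε ≤ dist p.1 p.2} :=
    (isClosed_le continuous_const continuous_dist).isCompact
  have hpos : ∀ p ∈ {p : X × X | ε ≤ dist p.1 p.2}, 0 < dist (π p.1) (π p.2) := by
    rintro ⟨x, y⟩ hxy
    refine dist_pos.2 fun heq => ?_
    obtain rfl : x = y := hinj heq
    exact (hε.trans_le hxy).ne' (dist_self x)
  have hcont : Continuous fun p : X × X => dist (π p.1) (π p.2) := by fun_prop
  obtain ⟨δ, hδ, hle⟩ := hcompact.exists_forall_le' hcont.continuousOn hpos
  exact ⟨δ / 2, half_pos hδ, fun x y hxy => (half_lt_self hδ).trans_le (hle (x, y) hxy.le)⟩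

theorem exists_pos_forall_sepNum_le [PseudoMetricSpace X] [CompactSpace X] [MetricSpace Y]
    [CompactSpace Y] {f : ℕ → X → X} {g : ℕ → Y → Y} (hg : ∀ n, Continuous (g n)) {π : X → Y}
    (hπ : Continuous π) (hinj : Injective π) (hsemi : ∀ n, Semiconj π (f n) (g n)) {ε : ℝ}
    (hε : 0 < ε) : ∃ δ > 0, ∀ n, sepNum dist f n ε ≤ sepNum dist g n δ := by
  obtain ⟨δ, hδ, hd⟩ := exists_pos_forall_lt_dist_map hπ hinj hε
  refine ⟨δ, hδ, fun n => ?_⟩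
  obtain ⟨E, hE, hcard⟩ := exists_isSeparatedSet_card_eq_sepNum dist f n ε
  have hmap : IsSeparatedSet dist g n δ (E.map ⟨π, hinj⟩) := by
    rw [Finset.coe_map]
    exact hE.image hsemi hd
  simpa only [Finset.card_map, hcard] using hmap.card_le_sepNum hg hδ

end SepNum

section Entropy

variable {X Y ι : Type*}

theorem natCast_mul_nadsEntropy_le {d : X → X → ℝ} {d' : Y → Y → ℝ} {f : ℕ → X → X}
    {g : ℕ → Y → Y} {k : ℕ} (hk : 0 < k)
    (hsep : ∀ ε > 0, ∃ δ > 0, ∀ n, sepNum d f n ε ^ k ≤ sepNum d' g n δ) :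
    (k : EReal) * nadsEntropy d f ≤ nadsEntropy d' g := by
  have hlog {s t : ℕ} (hst : s ^ k ≤ t) (n : ℕ) :
      (k : ℝ) * (Real.log s / n) ≤ Real.log t / n := by
    rw [← mul_div_assoc, ← Real.log_pow, ← Nat.cast_pow]
    exact div_le_div_of_nonneg_right (monotone_log_natCast hst) n.cast_nonneg
  have hk₀ : (0 : EReal) < k := by exact_mod_cast hk
  rw [mul_comm, ← EReal.le_div_iff_mul_le hk₀ (EReal.natCast_ne_top k)]
  refine iSup₂_le fun ε hε => ?_
  obtain ⟨δ, hδ, hle⟩ := hsep ε hε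
  rw [EReal.le_div_iff_mul_le hk₀ (EReal.natCast_ne_top k), mul_comm,
    ← EReal.limsup_const_mul_of_nonneg_of_ne_top hk₀.le (EReal.natCast_ne_top k)]
  refine le_iSup₂_of_le δ hδ (limsup_le_limsup (.of_forall fun n => ?_))
  dsimp only
  exact_mod_cast hlog (hle n) n

theorem card_mul_nadsEntropy_le_piMap [Fintype ι] [Nonempty ι] [PseudoMetricSpace X]
    [CompactSpace X] {f : ℕ → X → X} (hf : ∀ n, Continuous (f n)) :
    (Fintype.card ι : EReal) * nadsEntropy dist f ≤
      nadsEntropy dist fun n => Pi.map fun _ : ι => f n := by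
  refine natCast_mul_nadsEntropy_le Fintype.card_pos fun ε hε => ⟨ε, hε, fun n => ?_⟩
  simpa only [Finset.prod_const, Finset.card_univ] using
    prod_sepNum_le_sepNum_piMap (fun _ : ι => hf) n hε

theorem nadsEntropy_le_of_injective_semiconj [PseudoMetricSpace X] [CompactSpace X] [MetricSpace Y]
    [CompactSpace Y] {f : ℕ → X → X} {g : ℕ → Y → Y} (hg : ∀ n, Continuous (g n)) {π : X → Y}
    (hπ : Continuous π) (hinj : Injective π) (hsemi : ∀ n, Semiconj π (f n) (g n)) :
    nadsEntropy dist f ≤ nadsEntropy dist g := by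
  have h := natCast_mul_nadsEntropy_le (d := dist) (d' := dist) (f := f) (g := g) one_pos
    fun ε hε => by
      simpa only [pow_one] using exists_pos_forall_sepNum_le hg hπ hinj hsemi hε
  simpa only [Nat.cast_one, one_mul] using h

end Entropy

section Law

theorem exists_probabilityMeasure_injective (ι : Type*) [Finite ι] [Nonempty ι]
    [MeasurableSpace ι] [DiscreteMeasurableSpace ι] :
    ∃ P : ProbabilityMeasure ι, Injective fun s : Set ι => P s := by
  classical
  have : Fintype ι := Fintype.ofFinite ι
  obtain ⟨e, he⟩ := exists_injective_nat ι
  have hsum₀ : ∑' i, (2 : ℝ≥0∞) ^ e i ≠ 0 := by simp [tsum_fintype]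
  have hsum : ∑' i, (2 : ℝ≥0∞) ^ e i ≠ ⊤ := by simp [tsum_fintype, ENNReal.sum_eq_top]
  -- By uniqueness of binary expansions, the powers of two have distinct subset sums.
  let p : PMF ι := PMF.normalize (fun i => 2 ^ e i) hsum₀ hsum
  have hp (s : Set ι) :
      p.toMeasure s = ((∑ n ∈ s.toFinset.map ⟨e, he⟩, 2 ^ n : ℕ) : ℝ≥0∞) *
        (∑' i, (2 : ℝ≥0∞) ^ e i)⁻¹ := by
    conv_lhs => rw [← s.coe_toFinset, PMF.toMeasure_apply_finset]
    simp [p, PMF.normalize_apply, ← Finset.sum_mul]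
  refine ⟨⟨p.toMeasure, inferInstance⟩, fun s t hst => ?_⟩
  have hmeasure : p.toMeasure s = p.toMeasure t :=
    (ENNReal.toNNReal_eq_toNNReal_iff' (measure_ne_top _ _) (measure_ne_top _ _)).1 hst
  rw [hp, hp, ENNReal.mul_left_inj (ENNReal.inv_ne_zero.2 hsum) (ENNReal.inv_ne_top.2 hsum₀),
    Nat.cast_inj] at hmeasure
  exact toFinset_inj.1 (Finset.map_injective _ (Finset.geomSum_injective le_rfl hmeasure))

variable {ι X Y : Type*} [MeasurableSpace ι] [DiscreteMeasurableSpace ι] [MeasurableSpace X]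
  [MeasurableSpace Y]

/-- The law of `x : ι → X`, where `ι` carries the discrete `σ`-algebra and the probability measure
`P`; for finite `ι` this is `∑ i, P {i} • δ_{x i}`. Varying `x`, it maps the product `ι → X` to the
space of probability measures on `X`. -/
noncomputable def lawOf (P : ProbabilityMeasure ι) (x : ι → X) : ProbabilityMeasure X :=
  P.map (Measurable.of_discrete (f := x)).aemeasurable

theorem map_lawOf (P : ProbabilityMeasure ι) (x : ι → X) {f : X → Y} (hf : Measurable f) :
    (lawOf P x).map hf.aemeasurable = lawOf P (f ∘ x) :=
  Subtype.ext (Measure.map_map hf .of_discrete)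

theorem continuous_lawOf [Finite ι] [TopologicalSpace X] [OpensMeasurableSpace X]
    (P : ProbabilityMeasure ι) : Continuous (lawOf (X := X) P) := by
  have : Fintype ι := Fintype.ofFinite ι
  refine ProbabilityMeasure.continuous_iff_forall_continuous_integral.2 fun φ => ?_
  have hintegral (x : ι → X) :
      ∫ y, φ y ∂(lawOf P x : Measure X) = ∑ i, (P : Measure ι).real {i} * φ (x i) := by
    rw [lawOf, ProbabilityMeasure.toMeasure_map, integral_map Measurable.of_discrete.aemeasurable
      φ.continuous.measurable.aestronglyMeasurable, integral_fintype .of_finite]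
    rfl
  simp only [hintegral]
  fun_prop

/-- The law determines the `P`-mass of each fibre `x ⁻¹' {a}`, hence the fibre itself. -/
theorem lawOf_injective [MeasurableSingletonClass X] {P : ProbabilityMeasure ι}
    (hP : Injective fun s : Set ι => P s) : Injective (lawOf (X := X) P) := by
  intro x y hxy
  funext i
  have hmass : P (x ⁻¹' {x i}) = P (y ⁻¹' {x i}) := by
    simpa only [lawOf, ProbabilityMeasure.map_apply _ _ (measurableSet_singleton (x i))] using
      congrArg (fun μ : ProbabilityMeasure X => μ {x i}) hxy
  have hfibre : x ⁻¹' {x i} = y ⁻¹' {x i} := hP hmass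
  have hi : i ∈ y ⁻¹' {x i} := hfibre ▸ mem_singleton (x i)
  exact (mem_singleton_iff.1 hi).symm

end Law

theorem induced_entropy_top {X : Type*} [MetricSpace X] [CompactSpace X]
    [MeasurableSpace X] [BorelSpace X]
    (f : ℕ → X → X) (hf : ∀ n, Continuous (f n))
    (h : 0 < nadsEntropy (fun x y : X => dist x y) f)
    (m : MetricSpace (ProbabilityMeasure X))
    (hm : m.toUniformSpace.toTopologicalSpace =
      (inferInstance : TopologicalSpace (ProbabilityMeasure X))) :
    nadsEntropy (fun μ ν : ProbabilityMeasure X => @dist _ m.toDist μ ν)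
      (fun n μ => μ.map ((hf n).aemeasurable)) = ⊤ := by
  have hcompact : @CompactSpace (ProbabilityMeasure X) m.toUniformSpace.toTopologicalSpace := by
    rw [hm]; infer_instance
  refine eq_top_of_natCast_mul_le h fun k hk => ?_
  have : Nonempty (Fin k) := Fin.pos_iff_nonempty.1 hk
  obtain ⟨P, hP⟩ := exists_probabilityMeasure_injective (Fin k)
  have hpower := card_mul_nadsEntropy_le_piMap (ι := Fin k) hf
  rw [Fintype.card_fin] at hpower
  refine hpower.trans (nadsEntropy_le_of_injective_semiconj (π := lawOf P) (fun n => ?_) ?_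
    (lawOf_injective hP) fun n x => (map_lawOf P x (hf n).measurable).symm)
  · rw [hm]; exact ProbabilityMeasure.continuous_map (hf n)
  · rw [hm]; exact continuous_lawOf P
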